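/- Let n ≥ 1, let f ∈ L^1(ℝ^n, ℂ) be such that its Fourier transform ℱf has no zeros on ℝ^n, and let h ∈ L^1(ℝ^n, ℂ) be such that ℱh has compact support. Then there exists g ∈ L^1(ℝ^n, ℂ) such that f * g = h, where * denotes convolution. -/

import Mathlib

open MeasureTheory Complex Set

noncomputable section

/-- The Fourier transform `ℱf(ξ) = (2π)^{-n/2} ∫_{ℝ^n} e^{-iξ·x} f(x) dx`. -/
def fourierT (n : ℕ) (f : (Fin n → ℝ) → ℂ) (ξ : Fin n → ℝ) : ℂ :=
  (((2 * Real.pi) ^ (-(n : ℝ) / 2) : ℝ) : ℂ) *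
    ∫ x : Fin n → ℝ, Complex.exp (-I * ∑ i, (ξ i : ℂ) * (x i : ℂ)) * f x

/-!
By modulation and dilation it suffices to invert `𝓕 f` near the frequency `0`, for some dilate of
`f`, when `a := 𝓕 f 0 ≠ 0`. Fix an integrable `φ` with `𝓕 φ = 1` near `0`. The dilates of `f` are an
approximate identity up to the factor `a`, so for a suitable one `u := a φ - f * φ` has `L¹` norm
less than `|a|`. A Neumann series then solves `a g - u * g = φ`; where `𝓕 φ = 1` we have
`𝓕 u = a - 𝓕 f`, and the equation reads `𝓕 f 𝓕 g = 1`.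

Local inverses `𝓕 g₁` and `𝓕 g₂` patch to the inverse `𝓕 (g₁ + g₂ - f * g₁ * g₂)` on the union of
the two sets, so by compactness some integrable `k` satisfies `𝓕 f 𝓕 k = 1` on the support of
`𝓕 h`. Then `f * (k * h)` and `h` have the same Fourier transform, hence agree almost everywhere.
-/

open Filter Topology Module Convolution FourierTransform SchwartzMap
open scoped ENNReal ContDiff InnerProductSpace

section LpTranslation

variable {E G : Type*} [NormedAddCommGroup E] [AddGroup G] [MeasurableSpace G]
  {μ : Measure G} [μ.IsAddLeftInvariant] {p : ℝ≥0∞}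

lemma domAddAct_vadd_smul_Lp [NormedSpace ℂ E] [MeasurableAdd G] (y : Gᵈᵃᵃ) (a : ℂ) (φ : Lp E p μ) :
    y +ᵥ a • φ = a • (y +ᵥ φ) := by
  rcases φ with ⟨⟨_⟩, _⟩
  rfl

lemma continuous_mk_vadd_Lp [TopologicalSpace G] [IsTopologicalAddGroup G] [BorelSpace G]
    [IsLocallyFiniteMeasure μ] [μ.InnerRegularCompactLTTop] [Fact (1 ≤ p)] [Fact (p ≠ ⊤)]
    (φ : Lp E p μ) : Continuous fun y : G ↦ DomAddAct.mk y +ᵥ φ :=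
  (DomAddAct.continuous_mk (M := G)).vadd continuous_const

end LpTranslation

section LpConvolution

variable {E G : Type*} [NormedAddCommGroup E] [NormedSpace ℂ E] [AddGroup G] [MeasurableSpace G]
  [MeasurableAdd G] {μ : Measure G} [μ.IsAddLeftInvariant] {p : ℝ≥0∞} [Fact (1 ≤ p)]

/-- The convolution `x ↦ ∫ f y • φ (-y + x)` of a function `f` with `φ ∈ Lᵖ`, as a Bochner integral
of left translates in `Lᵖ`. It is `0` when that integral does not converge. -/
def lpConvolution (f : G → ℂ) (φ : Lp E p μ) : Lp E p μ :=
  ∫ y, f y • (DomAddAct.mk (-y) +ᵥ φ) ∂μ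

lemma norm_lpConvolution_le (f : G → ℂ) (φ : Lp E p μ) :
    ‖lpConvolution f φ‖ ≤ (∫ y, ‖f y‖ ∂μ) * ‖φ‖ :=
  calc ‖lpConvolution f φ‖ ≤ ∫ y, ‖f y • (DomAddAct.mk (-y) +ᵥ φ)‖ ∂μ :=
        norm_integral_le_integral_norm _
    _ = (∫ y, ‖f y‖ ∂μ) * ‖φ‖ := by
        simp only [norm_smul, DomAddAct.norm_vadd_Lp, integral_mul_const]

variable [TopologicalSpace G] [IsTopologicalAddGroup G] [SecondCountableTopology G] [BorelSpace G]
  [IsLocallyFiniteMeasure μ] [μ.InnerRegularCompactLTTop] [Fact (p ≠ ⊤)] {f : G → ℂ}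

lemma integrable_smul_vadd_Lp (hf : Integrable f μ) {τ : G → G} (hτ : Continuous τ)
    (φ : Lp E p μ) : Integrable (fun y ↦ f y • (DomAddAct.mk (τ y) +ᵥ φ)) μ := by
  refine (hf.norm.mul_const ‖φ‖).mono' (hf.aestronglyMeasurable.smul
    ((continuous_mk_vadd_Lp φ).comp hτ).aestronglyMeasurable) (.of_forall fun y ↦ ?_)
  rw [norm_smul, DomAddAct.norm_vadd_Lp]

/-- Convolution with a fixed integrable function as a bounded operator on `Lᵖ`. -/
def lpConvolutionCLM (hf : Integrable f μ) : Lp E p μ →L[ℂ] Lp E p μ :=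
  LinearMap.mkContinuous
    { toFun := lpConvolution f
      map_add' φ ψ := by
        simp only [lpConvolution, DomAddAct.vadd_Lp_add, smul_add]
        exact integral_add (integrable_smul_vadd_Lp hf continuous_neg φ)
          (integrable_smul_vadd_Lp hf continuous_neg ψ)
      map_smul' a φ := by
        simp only [lpConvolution, domAddAct_vadd_smul_Lp, smul_comm _ a, integral_smul,
          RingHom.id_apply] }
    (∫ y, ‖f y‖ ∂μ) (norm_lpConvolution_le f)

lemma norm_lpConvolutionCLM_le (hf : Integrable f μ) :
    ‖(lpConvolutionCLM hf : Lp E p μ →L[ℂ] Lp E p μ)‖ ≤ ∫ y, ‖f y‖ ∂μ :=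
  LinearMap.mkContinuous_norm_le _ (integral_nonneg fun _ ↦ norm_nonneg _) _

lemma exists_smul_sub_lpConvolution_eq [CompleteSpace E] (hf : Integrable f μ) {a : ℂ}
    (hfa : ∫ y, ‖f y‖ ∂μ < ‖a‖) (φ : Lp E p μ) :
    ∃ g : Lp E p μ, a • g - lpConvolution f g = φ := by
  let T : Lp E p μ →L[ℂ] Lp E p μ := lpConvolutionCLM hf
  have hT : ‖T‖ * ‖(1 : Lp E p μ →L[ℂ] Lp E p μ)‖ < ‖a‖ :=
    calc ‖T‖ * ‖(1 : Lp E p μ →L[ℂ] Lp E p μ)‖ ≤ ‖T‖ :=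
          mul_le_of_le_one_right (norm_nonneg _) ContinuousLinearMap.norm_id_le
      _ ≤ ∫ y, ‖f y‖ ∂μ := norm_lpConvolutionCLM_le hf
      _ < ‖a‖ := hfa
  have hunit : IsUnit (algebraMap ℂ (Lp E p μ →L[ℂ] Lp E p μ) a - T) :=
    spectrum.mem_resolventSet_of_norm_lt_mul hT
  exact (ContinuousLinearMap.isUnit_iff_bijective.mp hunit).surjective φ

end LpConvolution

section Dilation

variable {V E : Type*} [NormedAddCommGroup V] [NormedSpace ℝ V] [NormedAddCommGroup E]
  [NormedSpace ℝ E]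

/-- The dilate `f_s(x) = |s|⁻ᵈ f(x / s)`, `d = dim V`, normalised to have the same integral as `f`.
Meaningful for `s ≠ 0`. -/
def dilate (s : ℝ) (f : V → E) (x : V) : E :=
  |s ^ finrank ℝ V|⁻¹ • f (s⁻¹ • x)

variable [FiniteDimensional ℝ V] [MeasurableSpace V] [BorelSpace V] {μ : Measure V}
  [μ.IsAddHaarMeasure] {s : ℝ}

lemma integrable_dilate {f : V → E} (hf : Integrable f μ) (hs : s ≠ 0) :
    Integrable (dilate s f) μ :=
  (hf.comp_smul (inv_ne_zero hs)).smul _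

lemma integral_abs_inv_smul_comp_inv_smul (hs : s ≠ 0) (F : V → E) :
    ∫ x, |s ^ finrank ℝ V|⁻¹ • F (s⁻¹ • x) ∂μ = ∫ x, F x ∂μ := by
  rw [integral_smul, Measure.integral_comp_inv_smul, inv_smul_smul₀ (by positivity)]

end Dilation

section ApproximateIdentity

variable {V E : Type*} [NormedAddCommGroup V] [NormedSpace ℝ V] [FiniteDimensional ℝ V]
  [MeasurableSpace V] [BorelSpace V] {μ : Measure V} [μ.IsAddHaarMeasure]
  [NormedAddCommGroup E] [NormedSpace ℂ E] {p : ℝ≥0∞} [Fact (1 ≤ p)]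

lemma lpConvolution_dilate {s : ℝ} (hs : s ≠ 0) (f : V → ℂ) (φ : Lp E p μ) :
    lpConvolution (dilate s f) φ = ∫ y, f y • (DomAddAct.mk (-(s • y)) +ᵥ φ) ∂μ := by
  rw [← integral_abs_inv_smul_comp_inv_smul hs]
  simp only [lpConvolution, dilate, smul_inv_smul₀ hs, smul_assoc]

lemma tendsto_lpConvolution_dilate [CompleteSpace E] [Fact (p ≠ ⊤)] {f : V → ℂ}
    (hf : Integrable f μ) (φ : Lp E p μ) :
    Tendsto (fun s ↦ lpConvolution (dilate s f) φ) (𝓝[≠] 0) (𝓝 ((∫ y, f y ∂μ) • φ)) := by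
  have htranslate (y : V) :
      Tendsto (fun s : ℝ ↦ DomAddAct.mk (-(s • y)) +ᵥ φ) (𝓝 0) (𝓝 φ) := by
    have hcont : Continuous fun s : ℝ ↦ DomAddAct.mk (-(s • y)) +ᵥ φ :=
      (continuous_mk_vadd_Lp φ).comp (by fun_prop : Continuous fun s : ℝ ↦ -(s • y))
    simpa using hcont.tendsto 0
  have hlim : Tendsto (fun s : ℝ ↦ ∫ y, f y • (DomAddAct.mk (-(s • y)) +ᵥ φ) ∂μ) (𝓝 0)
      (𝓝 (∫ y, f y • φ ∂μ)) := by
    refine tendsto_integral_filter_of_dominated_convergence (fun y ↦ ‖f y‖ * ‖φ‖)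
      (.of_forall fun s ↦ ?_) (.of_forall fun s ↦ .of_forall fun y ↦ ?_)
      (hf.norm.mul_const _) (.of_forall fun y ↦ (htranslate y).const_smul (f y))
    · exact (integrable_smul_vadd_Lp hf (by fun_prop) φ).aestronglyMeasurable
    · rw [norm_smul, DomAddAct.norm_vadd_Lp]
  rw [← integral_smul_const]
  refine (hlim.mono_left nhdsWithin_le_nhds).congr' ?_
  filter_upwards [self_mem_nhdsWithin] with s hs
  exact (lpConvolution_dilate hs f φ).symm

end ApproximateIdentity

section Fourier

variable {V E : Type*} [NormedAddCommGroup V] [InnerProductSpace ℝ V] [FiniteDimensional ℝ V]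
  [MeasurableSpace V] [BorelSpace V] [NormedAddCommGroup E] [NormedSpace ℂ E]

/-- Modulation `f ↦ e^{2πi⟪·, η⟫} f`, which shifts the Fourier transform by `η`. -/
def modulate (η : V) (f : V → E) (x : V) : E :=
  Real.fourierChar ⟪x, η⟫_ℝ • f x

lemma integrable_modulate {f : V → E} (hf : Integrable f) (η : V) :
    Integrable (modulate η f) := by
  simpa [modulate] using! (Real.fourierIntegral_convergent_iff (-η)).2 hf

lemma fourier_modulate (η : V) (f : V → E) (ξ : V) : 𝓕 (modulate η f) ξ = 𝓕 f (ξ - η) := by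
  simp only [Real.fourier_eq, modulate, smul_smul, ← AddChar.map_add_eq_mul, inner_sub_right,
    neg_sub, neg_add_eq_sub]

lemma fourier_dilate {s : ℝ} (hs : s ≠ 0) (f : V → E) (ξ : V) :
    𝓕 (dilate s f) ξ = 𝓕 f (s • ξ) := by
  rw [Real.fourier_eq, Real.fourier_eq,
    ← integral_abs_inv_smul_comp_inv_smul hs (fun v ↦ Real.fourierChar (-⟪v, s • ξ⟫_ℝ) • f v)]
  simp only [dilate, real_inner_smul_left, real_inner_smul_right, mul_inv_cancel_left₀ hs,
    smul_comm (Real.fourierChar _)]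

lemma exists_schwartzMap_fourier_eq [CompleteSpace E] {g : V → E} (hg : ContDiff ℝ ∞ g)
    (hgc : HasCompactSupport g) : ∃ K : 𝓢(V, E), 𝓕 (K : V → E) = g :=
  ⟨𝓕⁻ (hgc.toSchwartzMap hg), by
    rw [← SchwartzMap.fourier_coe, FourierTransform.fourier_fourierInv_eq]
    rfl⟩

lemma exists_schwartzMap_fourier_eq_ofReal {g : V → ℝ} (hg : ContDiff ℝ ∞ g)
    (hgc : HasCompactSupport g) : ∃ K : 𝓢(V, ℂ), ∀ ξ, 𝓕 (K : V → ℂ) ξ = g ξ :=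
  (exists_schwartzMap_fourier_eq (Complex.ofRealCLM.contDiff.comp hg)
    (hgc.comp_left Complex.ofReal_zero)).imp fun _ ↦ congrFun

lemma integral_fourier_smul_eq_integral_smul_fourier [CompleteSpace E] {k : V → ℂ} {f : V → E}
    (hk : Integrable k) (hf : Integrable f) : ∫ ξ, 𝓕 k ξ • f ξ = ∫ x, k x • 𝓕 f x := by
  have := VectorFourier.integral_fourierIntegral_smul_eq_flip (L := innerₗ V)
    Real.continuous_fourierChar continuous_inner hk hf
  rwa [flip_innerₗ] at this

theorem ae_eq_of_fourier_eq [CompleteSpace E] {f g : V → E} (hf : Integrable f)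
    (hg : Integrable g) (hfg : 𝓕 f = 𝓕 g) : f =ᵐ[volume] g := by
  refine ae_eq_of_integral_contDiff_smul_eq hf.locallyIntegrable hg.locallyIntegrable
    fun k hk hkc ↦ ?_
  obtain ⟨K, hK⟩ := exists_schwartzMap_fourier_eq_ofReal hk hkc
  have hpair {u : V → E} (hu : Integrable u) : ∫ x, k x • u x = ∫ x, K x • 𝓕 u x := by
    simp only [← integral_fourier_smul_eq_integral_smul_fourier K.integrable hu, hK,
      Complex.coe_smul]
  rw [hpair hf, hpair hg, hfg]

end Fourier

section LocalInversion

variable {V E : Type*} [NormedAddCommGroup V] [InnerProductSpace ℝ V] [FiniteDimensional ℝ V]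
  [MeasurableSpace V] [BorelSpace V] [NormedAddCommGroup E] [NormedSpace ℂ E]

instance fact_one_ne_top : Fact ((1 : ℝ≥0∞) ≠ ⊤) := ⟨ENNReal.one_ne_top⟩

/-- Evaluation of the Fourier transform at `ξ` as a continuous linear map on `L¹`. -/
def fourierAt (ξ : V) : Lp E 1 (volume : Measure V) →L[ℂ] E :=
  (BoundedContinuousFunction.evalCLM ℂ ξ).comp (Real.Lp.fourierTransformCLM V E)

lemma fourierAt_apply (ξ : V) (φ : Lp E 1 (volume : Measure V)) :
    fourierAt ξ φ = 𝓕 (φ : V → E) ξ := rfl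

lemma fourierAt_toL1 {f : V → E} (hf : Integrable f) (ξ : V) :
    fourierAt ξ (hf.toL1 f) = 𝓕 f ξ :=
  Real.fourier_congr_ae hf.coeFn_toL1 ξ

lemma fourierAt_vadd (ξ y : V) (φ : Lp E 1 (volume : Measure V)) :
    fourierAt ξ (DomAddAct.mk (-y) +ᵥ φ) = Real.fourierChar (-⟪y, ξ⟫_ℝ) • fourierAt ξ φ := by
  have htranslate : (DomAddAct.mk (-y) +ᵥ φ : Lp E 1 volume) =ᵐ[volume] fun x ↦ φ (x + -y) := by
    simpa [add_comm] using DomAddAct.vadd_Lp_ae_eq (DomAddAct.mk (-y)) φ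
  have hshift := congrFun (VectorFourier.fourierIntegral_comp_add_right Real.fourierChar
    (volume : Measure V) (innerₗ V) φ (-y)) ξ
  rw [fourierAt_apply, Real.fourier_congr_ae htranslate]
  simpa using! hshift

lemma fourierAt_lpConvolution [CompleteSpace E] {f : V → ℂ} (hf : Integrable f)
    (φ : Lp E 1 (volume : Measure V)) (ξ : V) :
    fourierAt ξ (lpConvolution f φ) = 𝓕 f ξ • fourierAt ξ φ := by
  rw [lpConvolution, ← ContinuousLinearMap.integral_comp_comm _
    (integrable_smul_vadd_Lp hf continuous_neg φ), Real.fourier_eq, ← integral_smul_const]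
  simp only [map_smul, fourierAt_vadd, smul_assoc, smul_comm (f _)]

variable (V) in
lemma exists_fourierAt_eventuallyEq_one :
    ∃ φ : Lp ℂ 1 (volume : Measure V), ∀ᶠ ξ in 𝓝 0, fourierAt ξ φ = 1 := by
  let b : ContDiffBump (0 : V) := default
  obtain ⟨K, hK⟩ := exists_schwartzMap_fourier_eq_ofReal b.contDiff b.hasCompactSupport
  refine ⟨K.integrable.toL1 K, b.eventuallyEq_one.mono fun ξ hξ ↦ ?_⟩
  rw [fourierAt_toL1, hK, hξ, Pi.one_apply, Complex.ofReal_one]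

lemma exists_fourier_mul_eq_one_of_norm_sub_lt {f : V → ℂ} (hf : Integrable f) {a : ℂ}
    {φ : Lp ℂ 1 (volume : Measure V)} (hφ : ‖a • φ - lpConvolution f φ‖ < ‖a‖) :
    ∃ g : Lp ℂ 1 (volume : Measure V),
      ∀ ξ, fourierAt ξ φ = 1 → 𝓕 f ξ * fourierAt ξ g = 1 := by
  let u := a • φ - lpConvolution f φ
  have hu : Integrable u := L1.integrable_coeFn u
  obtain ⟨g, hg⟩ := exists_smul_sub_lpConvolution_eq hu
    (by rwa [← L1.norm_eq_integral_norm]) φ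
  refine ⟨g, fun ξ hξ ↦ ?_⟩
  have hû : 𝓕 (u : V → ℂ) ξ = a - 𝓕 f ξ := by
    rw [← fourierAt_apply, map_sub, map_smul, fourierAt_lpConvolution hf, hξ]
    simp
  have hĝ := congrArg (fourierAt ξ) hg
  rw [map_sub, map_smul, fourierAt_lpConvolution hu, hû, hξ, smul_eq_mul, smul_eq_mul] at hĝ
  linear_combination hĝ

lemma exists_fourier_dilate_mul_eventually_eq_one {f : V → ℂ} (hf : Integrable f)
    (hf0 : 𝓕 f 0 ≠ 0) : ∃ s : ℝ, s ≠ 0 ∧ ∃ g : Lp ℂ 1 (volume : Measure V),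
      ∀ᶠ ξ in 𝓝 0, 𝓕 (dilate s f) ξ * fourierAt ξ g = 1 := by
  obtain ⟨φ, hφ⟩ := exists_fourierAt_eventuallyEq_one V
  have hint : ∫ y, f y = 𝓕 f 0 := by simp [Real.fourier_eq]
  have hlim : Tendsto (fun s ↦ ‖𝓕 f 0 • φ - lpConvolution (dilate s f) φ‖) (𝓝[≠] 0) (𝓝 0) := by
    simpa [hint] using ((tendsto_lpConvolution_dilate hf φ).const_sub (𝓕 f 0 • φ)).norm
  obtain ⟨s, hsmall, hs⟩ :=
    ((hlim.eventually_lt_const (norm_pos_iff.mpr hf0)).and self_mem_nhdsWithin).exists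
  obtain ⟨g, hg⟩ := exists_fourier_mul_eq_one_of_norm_sub_lt (integrable_dilate hf hs) hsmall
  exact ⟨s, hs, g, hφ.mono hg⟩

theorem exists_fourier_mul_eventually_eq_one {f : V → ℂ} (hf : Integrable f) {ξ₀ : V}
    (hf0 : 𝓕 f ξ₀ ≠ 0) : ∃ g : Lp ℂ 1 (volume : Measure V),
      ∀ᶠ ξ in 𝓝 ξ₀, 𝓕 f ξ * fourierAt ξ g = 1 := by
  obtain ⟨s, hs, g, hg⟩ := exists_fourier_dilate_mul_eventually_eq_one
    (integrable_modulate hf (-ξ₀)) (by simpa [fourier_modulate] using hf0)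
  have hginv := integrable_modulate
    (integrable_dilate (L1.integrable_coeFn g) (inv_ne_zero hs)) ξ₀
  refine ⟨hginv.toL1 _, ?_⟩
  have hrescale : Tendsto (fun ξ ↦ s⁻¹ • (ξ - ξ₀)) (𝓝 ξ₀) (𝓝 0) := by
    have hcont : Continuous fun ξ : V ↦ s⁻¹ • (ξ - ξ₀) := by fun_prop
    simpa using hcont.tendsto ξ₀
  filter_upwards [hrescale.eventually hg] with ξ hξ
  rw [fourier_dilate hs, fourier_modulate, smul_inv_smul₀ hs, sub_neg_eq_add, sub_add_cancel] at hξ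
  rwa [fourierAt_toL1, fourier_modulate, fourier_dilate (inv_ne_zero hs)]

lemma exists_fourier_mul_eq_one_union {f : V → ℂ} (hf : Integrable f) {S T : Set V}
    {g k : Lp ℂ 1 (volume : Measure V)} (hg : ∀ ξ ∈ S, 𝓕 f ξ * fourierAt ξ g = 1)
    (hk : ∀ ξ ∈ T, 𝓕 f ξ * fourierAt ξ k = 1) :
    ∃ l : Lp ℂ 1 (volume : Measure V), ∀ ξ ∈ S ∪ T, 𝓕 f ξ * fourierAt ξ l = 1 := by
  -- This `l` satisfies `1 - f̂ l̂ = (1 - f̂ ĝ) (1 - f̂ k̂)`.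
  refine ⟨g + k - lpConvolution f (lpConvolution g k), fun ξ hξ ↦ ?_⟩
  rw [map_sub, map_add, fourierAt_lpConvolution hf,
    fourierAt_lpConvolution (L1.integrable_coeFn g), ← fourierAt_apply, smul_eq_mul, smul_eq_mul]
  rcases hξ with hξS | hξT
  · linear_combination (1 - 𝓕 f ξ * fourierAt ξ k) * hg ξ hξS
  · linear_combination (1 - 𝓕 f ξ * fourierAt ξ g) * hk ξ hξT

theorem exists_fourier_mul_eq_one_of_isCompact {f : V → ℂ} (hf : Integrable f) {K : Set V}
    (hK : IsCompact K) (hfK : ∀ ξ ∈ K, 𝓕 f ξ ≠ 0) :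
    ∃ g : Lp ℂ 1 (volume : Measure V), ∀ ξ ∈ K, 𝓕 f ξ * fourierAt ξ g = 1 := by
  refine hK.induction_on
    (p := fun S ↦ ∃ g : Lp ℂ 1 (volume : Measure V), ∀ ξ ∈ S, 𝓕 f ξ * fourierAt ξ g = 1)
    ⟨0, by simp⟩ (fun S T hST ⟨g, hg⟩ ↦ ⟨g, fun ξ hξ ↦ hg ξ (hST hξ)⟩)
    (fun S T ⟨g, hg⟩ ⟨k, hk⟩ ↦ exists_fourier_mul_eq_one_union hf hg hk) fun ξ₀ hξ₀ ↦ ?_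
  obtain ⟨g, hg⟩ := exists_fourier_mul_eventually_eq_one hf (hfK ξ₀ hξ₀)
  exact ⟨_, mem_nhdsWithin_of_mem_nhds hg, g, fun ξ hξ ↦ hξ⟩

theorem exists_integrable_convolution_ae_eq [CompleteSpace E] {f : V → ℂ} {h : V → E}
    (hf : Integrable f) (hh : Integrable h) (hhc : HasCompactSupport (𝓕 h))
    (hfh : ∀ ξ ∈ tsupport (𝓕 h), 𝓕 f ξ ≠ 0) :
    ∃ g : V → E, Integrable g ∧ f ⋆[ContinuousLinearMap.lsmul ℂ ℂ, volume] g =ᵐ[volume] h := by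
  obtain ⟨k, hk⟩ := exists_fourier_mul_eq_one_of_isCompact hf hhc hfh
  let g := lpConvolution k (hh.toL1 h)
  have hg : Integrable g := L1.integrable_coeFn g
  refine ⟨g, hg, ae_eq_of_fourier_eq (hf.integrable_convolution _ hg) hh ?_⟩
  ext ξ
  rw [Real.fourier_smul_convolution_eq hf hg, ← fourierAt_apply,
    fourierAt_lpConvolution (L1.integrable_coeFn k), fourierAt_toL1, smul_smul]
  by_cases hξ : ξ ∈ tsupport (𝓕 h)
  · rw [← fourierAt_apply, hk ξ hξ, one_smul]
  · rw [image_eq_zero_of_notMem_tsupport hξ, smul_zero]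

end LocalInversion

section Normalization

variable {n : ℕ}

variable (n) in
/-- The change of frequency variable `w ↦ 2πw` between Mathlib's Fourier transform on Euclidean
space, with kernel `e^{-2πi⟪w, x⟫}`, and `fourierT`. -/
def frequencyHomeomorph : EuclideanSpace ℝ (Fin n) ≃ₜ (Fin n → ℝ) :=
  (EuclideanSpace.equiv (Fin n) ℝ).toHomeomorph.trans
    (Homeomorph.smulOfNeZero (2 * Real.pi) Real.two_pi_pos.ne')

lemma fourierT_frequencyHomeomorph (f : (Fin n → ℝ) → ℂ) (w : EuclideanSpace ℝ (Fin n)) :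
    fourierT n f (frequencyHomeomorph n w) =
      ((2 * Real.pi) ^ (-(n : ℝ) / 2) : ℝ) *
        𝓕 (f ∘ WithLp.ofLp : EuclideanSpace ℝ (Fin n) → ℂ) w := by
  rw [Real.fourier_eq', fourierT, ← (PiLp.volume_preserving_toLp (Fin n)).integral_comp
    (MeasurableEquiv.toLp 2 (Fin n → ℝ)).measurableEmbedding]
  have hphase (x : Fin n → ℝ) : -I * ∑ i, (frequencyHomeomorph n w i : ℂ) * (x i : ℂ) =
      ↑(-2 * Real.pi * ⟪WithLp.toLp 2 x, w⟫_ℝ) * I := by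
    simp only [frequencyHomeomorph, PiLp.inner_apply, RCLike.inner_apply, conj_trivial,
      Complex.ofReal_mul, Complex.ofReal_sum, Finset.mul_sum, Finset.sum_mul]
    refine Finset.sum_congr rfl fun i _ ↦ ?_
    simp only [Homeomorph.trans_apply, ContinuousLinearEquiv.coe_toHomeomorph,
      Homeomorph.smulOfNeZero_apply, Pi.smul_apply, PiLp.continuousLinearEquiv_apply, smul_eq_mul,
      ofReal_mul, ofReal_ofNat, neg_mul, ofReal_neg, neg_inj]
    ring
  simp only [hphase, smul_eq_mul, Function.comp_apply]

lemma fourierT_frequencyHomeomorph_eq_zero_iff {f : (Fin n → ℝ) → ℂ}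
    {w : EuclideanSpace ℝ (Fin n)} :
    fourierT n f (frequencyHomeomorph n w) = 0 ↔
      𝓕 (f ∘ WithLp.ofLp : EuclideanSpace ℝ (Fin n) → ℂ) w = 0 := by
  have hconst : (((2 * Real.pi) ^ (-(n : ℝ) / 2) : ℝ) : ℂ) ≠ 0 :=
    Complex.ofReal_ne_zero.mpr (by positivity)
  rw [fourierT_frequencyHomeomorph, mul_eq_zero_iff_left hconst]

lemma tsupport_fourier_comp_ofLp (f : (Fin n → ℝ) → ℂ) :
    tsupport (𝓕 (f ∘ WithLp.ofLp : EuclideanSpace ℝ (Fin n) → ℂ)) =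
      frequencyHomeomorph n ⁻¹' tsupport (fourierT n f) := by
  rw [tsupport, tsupport, Homeomorph.preimage_closure]
  congr 1
  ext w
  exact fourierT_frequencyHomeomorph_eq_zero_iff.not.symm

end Normalization

theorem exists_L1_factor_of_fourier_ne_zero_general {n : ℕ} {f h : (Fin n → ℝ) → ℂ}
    (hf : Integrable f) (hh : Integrable h)
    (hfh : ∀ ξ ∈ tsupport (fourierT n h), fourierT n f ξ ≠ 0)
    (hhc : HasCompactSupport (fourierT n h)) :
    ∃ g : (Fin n → ℝ) → ℂ, Integrable g ∧
      ∀ᵐ x : Fin n → ℝ, (∫ y : Fin n → ℝ, f (x - y) * g y) = h x := by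
  have hofLp := PiLp.volume_preserving_ofLp (Fin n)
  have htoLp := PiLp.volume_preserving_toLp (Fin n)
  have hcompact : HasCompactSupport (𝓕 (h ∘ WithLp.ofLp : EuclideanSpace ℝ (Fin n) → ℂ)) := by
    rw [HasCompactSupport, tsupport_fourier_comp_ofLp]
    exact (frequencyHomeomorph n).isCompact_preimage.mpr hhc
  obtain ⟨g, hg, hfg⟩ := exists_integrable_convolution_ae_eq
    (hofLp.integrable_comp_of_integrable hf) (hofLp.integrable_comp_of_integrable hh) hcompact
    fun w hw ↦ fourierT_frequencyHomeomorph_eq_zero_iff.not.mp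
      (hfh _ (by rwa [tsupport_fourier_comp_ofLp] at hw))
  refine ⟨g ∘ WithLp.toLp 2, htoLp.integrable_comp_of_integrable hg, ?_⟩
  filter_upwards [htoLp.quasiMeasurePreserving.ae hfg] with x hx
  rwa [convolution_lsmul_swap, ← htoLp.integral_comp
    (MeasurableEquiv.toLp 2 (Fin n → ℝ)).measurableEmbedding] at hx

/-- If `f ∈ L¹(ℝ^n, ℂ)` has nowhere-vanishing Fourier transform and
`h ∈ L¹(ℝ^n, ℂ)` has compactly supported Fourier transform, then there is
`g ∈ L¹(ℝ^n, ℂ)` with `f * g = h` (convolution). -/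
theorem exists_L1_factor_of_fourier_ne_zero
    (n : ℕ) (hn : 1 ≤ n) (f h : (Fin n → ℝ) → ℂ)
    (hf : Integrable f) (hh : Integrable h)
    (hfz : ∀ ξ : Fin n → ℝ, fourierT n f ξ ≠ 0)
    (hhc : HasCompactSupport (fourierT n h)) :
    ∃ g : (Fin n → ℝ) → ℂ, Integrable g ∧
      ∀ᵐ x : Fin n → ℝ, (∫ y : Fin n → ℝ, f (x - y) * g y) = h x :=
  exists_L1_factor_of_fourier_ne_zero_general hf hh (fun ξ _ ↦ hfz ξ) hhc
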